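/- arXiv:1307.4394 — 4 statements merged into one kernel-verified Lean document; each statement's English description precedes it below -/
import Mathlib

section
/- Fix n ≥ 1, γ ∈ (0,1), a probability space (Ω, P), p-values PV_1, …, PV_n : Ω → [0,1], and a nonempty set I ⊆ {1,…,n} of true hypotheses with P(PV_i ≤ u) ≤ u for all i ∈ I and u ∈ (0,1). Let 0 ≤ c_1 ≤ ⋯ ≤ c_n ≤ 1 and consider the step-down procedure with these constants. Define β_l(|I|) = c_{k_{|I|}(l)} for l = 1, …, ⌊γn⌋+1 and β_0(|I|) = 0. Then P(FDP > γ) ≤ |I| · Σ_{i=1}^{N(|I|)} (β_i(|I|) − β_{i−1}(|I|))/i. -/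
/-!
The event `FDP > γ` forces a Simes-type event on the true null p-values alone: for some level
`l ≤ N(|I|)`, at least `l` of them are at most `β_l`. Indeed, let `r` be the *first* index for
which `V_r = #{i ∈ I : PV_i ≤ c_r}` exceeds `γ r`, and put `l = ⌊γ r⌋ + 1 ≤ V_r`. By minimality
at most `γ (r - 1)` of the p-values `≤ c_(r-1)` are null, whereas the step-down procedure found at
least `r - 1` such p-values, so there are at least `(1 - γ) (r - 1)` false hypotheses. This bounds
`r` in terms of `l` and gives `r ≤ k_{|I|}(l)` as well as `l ≤ N(|I|)`
(`exists_level_of_FDPSD_gt`).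

The probability of the Simes-type event is bounded by Markov's inequality (`measure_simes_le`):
each null p-value lying in `(β_(l-1), β_l]` gets weight `1/l`, and on the event the total weight is
at least `1`. After summation by parts the weight is a nonnegative combination of the indicators of
`{PV_i ≤ β_l}`, so its expectation is controlled by the hypothesis on the null p-values. As the
p-values need not be measurable, these sets are replaced by their measurable hulls.
-/

open MeasureTheory

noncomputable section

namespace GenError

variable {Ω : Type*}

/-- The number of indices `i ∈ s` whose p-value at `ω` is at most `x`
(used to express order statistics: the `k`-th smallest of the `PV i`, `i ∈ s`,
is `≤ x` iff `k ≤ numLe s PV x ω`). -/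
def numLe (s : Finset ℕ) (PV : ℕ → Ω → ℝ) (x : ℝ) (ω : Ω) : ℕ :=
  (s.filter fun i => PV i ω ≤ x).card

/-- Number of rejections of the step-up procedure with critical constants `c` on
hypotheses `1, …, n`: `max {i : PV_(i) ≤ c i}` (and `0` if no such `i` exists). -/
def numRejSU (n : ℕ) (PV : ℕ → Ω → ℝ) (c : ℕ → ℝ) (ω : Ω) : ℕ :=
  ((Finset.Icc 1 n).filter fun i => i ≤ numLe (Finset.Icc 1 n) PV (c i) ω).sup id

open scoped Classical in
/-- Number of rejections of the step-down procedure with critical constants `c` on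
hypotheses `1, …, n`: `max {i : ∀ j ≤ i, PV_(j) ≤ c j}` (and `0` if `PV_(1) > c 1`). -/
def numRejSD (n : ℕ) (PV : ℕ → Ω → ℝ) (c : ℕ → ℝ) (ω : Ω) : ℕ :=
  ((Finset.Icc 1 n).filter fun i =>
      ∀ j ∈ Finset.Icc 1 i, j ≤ numLe (Finset.Icc 1 n) PV (c j) ω).sup id

/-- Number of rejected true hypotheses when `R` hypotheses are rejected by a stepwise
procedure with nondecreasing critical constants `c` (the rejected hypotheses, i.e. those
attaining the `R` smallest p-values, are exactly those with p-value `≤ c R`). -/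
def numFalse (PV : ℕ → Ω → ℝ) (c : ℕ → ℝ) (I : Finset ℕ) (R : ℕ) (ω : Ω) : ℕ :=
  if R = 0 then 0 else (I.filter fun i => PV i ω ≤ c R).card

/-- `V` for the step-up procedure. -/
def VSU (n : ℕ) (PV : ℕ → Ω → ℝ) (c : ℕ → ℝ) (I : Finset ℕ) (ω : Ω) : ℕ :=
  numFalse PV c I (numRejSU n PV c ω) ω

/-- `V` for the step-down procedure. -/
def VSD (n : ℕ) (PV : ℕ → Ω → ℝ) (c : ℕ → ℝ) (I : Finset ℕ) (ω : Ω) : ℕ :=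
  numFalse PV c I (numRejSD n PV c ω) ω

/-- False discovery proportion of the step-up procedure: `V/R` if `R > 0`, else `0`. -/
def FDPSU (n : ℕ) (PV : ℕ → Ω → ℝ) (c : ℕ → ℝ) (I : Finset ℕ) (ω : Ω) : ℝ :=
  if numRejSU n PV c ω = 0 then 0
  else (VSU n PV c I ω : ℝ) / (numRejSU n PV c ω : ℝ)

/-- False discovery proportion of the step-down procedure: `V/R` if `R > 0`, else `0`. -/
def FDPSD (n : ℕ) (PV : ℕ → Ω → ℝ) (c : ℕ → ℝ) (I : Finset ℕ) (ω : Ω) : ℝ :=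
  if numRejSD n PV c ω = 0 then 0
  else (VSD n PV c I ω : ℝ) / (numRejSD n PV c ω : ℝ)

/-- The matrix `A^{kFWER-SU}(k)` (rows/columns indexed by `1, …, n`). -/
def AkSU (n k i j : ℕ) : ℝ :=
  if i < k then 0
  else if j < n + k - i then 0
  else if j < n then (i : ℝ) * (1 / ((j + i - n : ℕ) : ℝ) - 1 / (((j + i - n : ℕ) : ℝ) + 1))
  else if j = n then 1
  else 0

/-- The matrix `A^{kFWER-SD}(k)` (rows/columns indexed by `1, …, n`). -/
def AkSD (n k i j : ℕ) : ℝ :=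
  if k ≤ i ∧ j = n - i + k then (i : ℝ) / (k : ℝ) else 0

/-- `m(j) = ⌊γ j⌋ + 1`. -/
def mfl (γ : ℝ) (j : ℕ) : ℕ := (⌊γ * (j : ℝ)⌋).toNat + 1

/-- `M̃(i) = max {l ∈ {1,…,n} : m(l) ≤ i}`. -/
def Mt (γ : ℝ) (n i : ℕ) : ℕ :=
  ((Finset.Icc 1 n).filter fun l => mfl γ l ≤ i).sup id

/-- `g_i(l) = max (i - n + l, m(l))`. -/
def gg (γ : ℝ) (n i l : ℕ) : ℕ := max (i + l - n) (mfl γ l)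

/-- `M(i) = g_i(M̃(i))`. -/
def MM (γ : ℝ) (n i : ℕ) : ℕ := gg γ n i (Mt γ n i)

/-- `t_k(i) = max {l ∈ {1,…,M̃(i)} : g_i(l) = k}`. -/
def tt (γ : ℝ) (n i k : ℕ) : ℕ :=
  ((Finset.Icc 1 (Mt γ n i)).filter fun l => gg γ n i l = k).sup id

/-- The matrix `A^{FDP-SU}(γ)`: the entry in column `j = t_k(i)` for `1 ≤ k < M(i)` is
`i (1/k - 1/(k+1))` (such a `k` necessarily equals `g_i(j)`), the entry in column
`j = t_{M(i)}(i)` is `i / M(i)`, and all other entries vanish. -/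
def AFDPSU (γ : ℝ) (n i j : ℕ) : ℝ :=
  if j = tt γ n i (MM γ n i) then (i : ℝ) / (MM γ n i : ℝ)
  else if 1 ≤ gg γ n i j ∧ gg γ n i j < MM γ n i ∧ j = tt γ n i (gg γ n i j) then
    (i : ℝ) * (1 / (gg γ n i j : ℝ) - 1 / ((gg γ n i j : ℝ) + 1))
  else 0

/-- `k_i(l) = min (n, n + l - i, ⌈l/γ⌉ - 1)`. -/
def kk (γ : ℝ) (n i l : ℕ) : ℕ :=
  min n (min (n + l - i) ((⌈(l : ℝ) / γ⌉).toNat - 1))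

/-- `N(i) = min (⌊γ n⌋ + 1, i, ⌊γ ((n - i)/(1 - γ) + 1)⌋ + 1)`. -/
def NN (γ : ℝ) (n i : ℕ) : ℕ :=
  min ((⌊γ * (n : ℝ)⌋).toNat + 1)
    (min i ((⌊γ * ((((n : ℝ) - (i : ℝ)) / (1 - γ)) + 1)⌋).toNat + 1))

/-- The matrix `Ã` for the step-down FDP bound. -/
def Atilde (γ : ℝ) (n i j : ℕ) : ℝ :=
  if 1 ≤ j ∧ j < NN γ n i then (i : ℝ) * (1 / (j : ℝ) - 1 / ((j : ℝ) + 1))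
  else if j = NN γ n i then (i : ℝ) / (NN γ n i : ℝ)
  else 0

/-- The matrix `A^{FDP-SD}(γ)`: `A i j = ∑_{l : k_i(l) = j} Ã i l` when `j` is in the image
`M(i)` of `k_i`, and `0` otherwise (the sum over the empty fibre being `0`). -/
def AFDPSD (γ : ℝ) (n i j : ℕ) : ℝ :=
  ∑ l ∈ (Finset.Icc 1 ((⌊γ * (n : ℝ)⌋).toNat + 1)).filter (fun l => kk γ n i l = j),
    Atilde γ n i l

/-- The vector `β(i)` built from constants `c` for the step-down FDP bound:
`β_l(i) = c (k_i(l))` for `1 ≤ l ≤ ⌊γ n⌋ + 1`, and `0` otherwise. -/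
def betaVec (γ : ℝ) (n i : ℕ) (c : ℕ → ℝ) (l : ℕ) : ℝ :=
  if 1 ≤ l ∧ l ≤ (⌊γ * (n : ℝ)⌋).toNat + 1 then c (kk γ n i l) else 0

/-- `β_l(i) = c (k_i(l))`, with the convention `β_0(i) = 0`. -/
def betaSD (γ : ℝ) (n i : ℕ) (c : ℕ → ℝ) (l : ℕ) : ℝ :=
  if l = 0 then 0 else c (kk γ n i l)

/-- `c (t_k(i))`, with the convention that the value at `k = 0` is `0`. -/
def cT (γ : ℝ) (n i : ℕ) (c : ℕ → ℝ) (k : ℕ) : ℝ :=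
  if k = 0 then 0 else c (tt γ n i k)

/-- The Lehmann–Romano constants `d^{LR}_j = k/(n + k - j)`. -/
def dLR (n k j : ℕ) : ℝ := (k : ℝ) / ((n + k - j : ℕ) : ℝ)

/-! ### A Simes-type probability bound -/

/-- Summation by parts, with weights `1/l - 1/(l+1)`. -/
lemma sum_diff_div (b : ℕ → ℝ) (hb : b 0 = 0) (N : ℕ) :
    ∑ l ∈ Finset.Icc 1 N, (b l - b (l - 1)) / (l : ℝ) =
      ∑ l ∈ Finset.Icc 1 N, 1 / ((l : ℝ) * (l + 1)) * b l + 1 / ((N : ℝ) + 1) * b N := by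
  induction N with
  | zero => simp [hb]
  | succ k ih =>
    rw [Finset.sum_Icc_succ_top (by omega), Finset.sum_Icc_succ_top (by omega), ih]
    simp only [Nat.add_sub_cancel]
    push_cast
    have h1 : (k : ℝ) + 1 ≠ 0 := by positivity
    have h2 : (k : ℝ) + 1 + 1 ≠ 0 := by positivity
    field_simp
    ring

lemma sum_Icc_telescope (m N : ℕ) (hm : 1 ≤ m) (h : m ≤ N) :
    ∑ l ∈ Finset.Icc m N, 1 / ((l : ℝ) * (l + 1)) + 1 / ((N : ℝ) + 1) = 1 / (m : ℝ) := by
  induction N, h using Nat.le_induction with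
  | base =>
    have h1 : (m : ℝ) ≠ 0 := by positivity
    have h2 : (m : ℝ) + 1 ≠ 0 := by positivity
    simp only [Finset.Icc_self, Finset.sum_singleton]
    field_simp
    ring
  | succ k hk ih =>
    rw [Finset.sum_Icc_succ_top (by omega), ← ih]
    push_cast
    have h1 : (k : ℝ) + 1 ≠ 0 := by positivity
    have h2 : (k : ℝ) + 1 + 1 ≠ 0 := by positivity
    field_simp
    ring

/-- Union bound of Simes type. Neither measurability nor independence of the `PV i` is needed. -/
lemma measure_simes_le {Ω : Type*} [MeasurableSpace Ω] (P : Measure Ω)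
    (PV : ℕ → Ω → ℝ) (I : Finset ℕ) (N : ℕ) (b : ℕ → ℝ) (hb0 : b 0 = 0)
    (hb : ∀ l ≤ N, 0 ≤ b l) (hmono : ∀ m l, 1 ≤ m → m ≤ l → l ≤ N → b m ≤ b l)
    (hP : ∀ i ∈ I, ∀ l ≤ N, P {ω | PV i ω ≤ b l} ≤ ENNReal.ofReal (b l)) :
    P {ω | ∃ l ∈ Finset.Icc 1 N, l ≤ (I.filter fun i => PV i ω ≤ b l).card} ≤
      ENNReal.ofReal ((I.card : ℝ) *
        ∑ l ∈ Finset.Icc 1 N, (b l - b (l - 1)) / (l : ℝ)) := by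
  set A : ℕ → ℕ → Set Ω := fun i l => toMeasurable P {ω | PV i ω ≤ b l} with hA
  have hAm : ∀ i l, MeasurableSet (A i l) := fun i l => measurableSet_toMeasurable _ _
  have hAP : ∀ i l, P (A i l) = P {ω | PV i ω ≤ b l} := fun i l => measure_toMeasurable _
  have hAs : ∀ i l, {ω | PV i ω ≤ b l} ⊆ A i l := fun i l => subset_toMeasurable _ _
  set a : ℕ → ENNReal := fun l => ENNReal.ofReal (1 / ((l : ℝ) * (l + 1))) with ha
  set e : ENNReal := ENNReal.ofReal (1 / ((N : ℝ) + 1)) with he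
  set g : ℕ → Ω → ENNReal := fun i ω =>
    ∑ l ∈ Finset.Icc 1 N, (A i l).indicator (fun _ => a l) ω +
      (A i N).indicator (fun _ => e) ω with hg
  have hgm1 : ∀ i, Measurable fun ω =>
      ∑ l ∈ Finset.Icc 1 N, (A i l).indicator (fun _ => a l) ω := fun i =>
    Finset.measurable_fun_sum _ fun l _ => measurable_const.indicator (hAm i l)
  have hgm : ∀ i, Measurable (g i) := fun i =>
    (hgm1 i).add (measurable_const.indicator (hAm i N))
  have hgint : ∀ i ∈ I, ∫⁻ ω, g i ω ∂P ≤
      ENNReal.ofReal (∑ l ∈ Finset.Icc 1 N, (b l - b (l - 1)) / (l : ℝ)) := by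
    intro i hi
    rw [sum_diff_div b hb0 N, ENNReal.ofReal_add, ENNReal.ofReal_sum_of_nonneg]
    · simp only [hg]
      rw [lintegral_add_left (hgm1 i), lintegral_finsetSum _
        (fun l _ => measurable_const.indicator (hAm i l))]
      gcongr with l hl
      · rw [lintegral_indicator_const (hAm i l), ENNReal.ofReal_mul (by positivity), hAP]
        gcongr
        exact hP i hi l (Finset.mem_Icc.1 hl).2
      · rw [lintegral_indicator_const (hAm i N), ENNReal.ofReal_mul (by positivity), hAP]
        gcongr
        exact hP i hi N le_rfl
    · intro l hl
      exact mul_nonneg (by positivity) (hb l (Finset.mem_Icc.1 hl).2)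
    · exact Finset.sum_nonneg fun l hl =>
        mul_nonneg (by positivity) (hb l (Finset.mem_Icc.1 hl).2)
    · exact mul_nonneg (by positivity) (hb N le_rfl)
  have hsub : {ω | ∃ l ∈ Finset.Icc 1 N, l ≤ (I.filter fun i => PV i ω ≤ b l).card} ⊆
      {ω | 1 ≤ ∑ i ∈ I, g i ω} := by
    rintro ω ⟨m, hm, hcard⟩
    obtain ⟨hm1, hmN⟩ := Finset.mem_Icc.1 hm
    have hgi : ∀ i, PV i ω ≤ b m → ENNReal.ofReal (1 / (m : ℝ)) ≤ g i ω := by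
      intro i hi
      have hmem : ∀ l, m ≤ l → l ≤ N → ω ∈ A i l := fun l h1 h2 =>
        hAs i l (hi.trans (hmono m l hm1 h1 h2))
      rw [← sum_Icc_telescope m N hm1 hmN, ENNReal.ofReal_add
        (Finset.sum_nonneg fun l _ => by positivity) (by positivity),
        ENNReal.ofReal_sum_of_nonneg (fun l _ => by positivity)]
      simp only [hg]
      rw [Set.indicator_of_mem (hmem N hmN le_rfl)]
      gcongr
      calc ∑ l ∈ Finset.Icc m N, ENNReal.ofReal (1 / ((l : ℝ) * (l + 1)))
          = ∑ l ∈ Finset.Icc m N, (A i l).indicator (fun _ => a l) ω := by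
            refine Finset.sum_congr rfl fun l hl => ?_
            rw [Set.indicator_of_mem
              (hmem l (Finset.mem_Icc.1 hl).1 (Finset.mem_Icc.1 hl).2)]
        _ ≤ _ := Finset.sum_le_sum_of_subset (Finset.Icc_subset_Icc_left hm1)
    have hmpos : (0 : ℝ) < m := by exact_mod_cast hm1
    calc (1 : ENNReal) = (m : ENNReal) * ENNReal.ofReal (1 / (m : ℝ)) := by
          rw [← ENNReal.ofReal_natCast, ← ENNReal.ofReal_mul hmpos.le,
            mul_one_div_cancel hmpos.ne', ENNReal.ofReal_one]
      _ ≤ ((I.filter fun i => PV i ω ≤ b m).card : ENNReal) *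
            ENNReal.ofReal (1 / (m : ℝ)) := by
          gcongr
      _ = ∑ i ∈ I.filter fun i => PV i ω ≤ b m, ENNReal.ofReal (1 / (m : ℝ)) := by
          rw [Finset.sum_const, nsmul_eq_mul]
      _ ≤ ∑ i ∈ I.filter fun i => PV i ω ≤ b m, g i ω :=
          Finset.sum_le_sum fun i hi => hgi i (Finset.mem_filter.1 hi).2
      _ ≤ ∑ i ∈ I, g i ω := Finset.sum_le_sum_of_subset (Finset.filter_subset _ _)
  calc _ ≤ P {ω | 1 ≤ ∑ i ∈ I, g i ω} := measure_mono hsub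
    _ ≤ ∫⁻ ω, ∑ i ∈ I, g i ω ∂P := by
        have := mul_meas_ge_le_lintegral (μ := P)
          (Finset.measurable_fun_sum I fun i _ => hgm i) 1
        simpa using this
    _ = ∑ i ∈ I, ∫⁻ ω, g i ω ∂P := lintegral_finsetSum _ fun i _ => hgm i
    _ ≤ ∑ i ∈ I, ENNReal.ofReal (∑ l ∈ Finset.Icc 1 N, (b l - b (l - 1)) / (l : ℝ)) :=
        Finset.sum_le_sum hgint
    _ = _ := by
        rw [Finset.sum_const, nsmul_eq_mul, ENNReal.ofReal_mul (by positivity),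
          ENNReal.ofReal_natCast]

/-! ### The event `FDP > γ` -/

lemma kk_mono (γ : ℝ) (hγ : 0 < γ) (n i m l : ℕ) (h : m ≤ l) : kk γ n i m ≤ kk γ n i l := by
  have h1 : ⌈(m : ℝ) / γ⌉ ≤ ⌈(l : ℝ) / γ⌉ := by
    apply Int.ceil_le_ceil
    gcongr
  unfold kk
  omega

lemma kk_mem (γ : ℝ) (hγ : γ ∈ Set.Ioo (0 : ℝ) 1) (n i l : ℕ) (hn : 1 ≤ n) (hi : i ≤ n)
    (hl : 1 ≤ l) : kk γ n i l ∈ Set.Icc 1 n := by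
  have h1 : (1 : ℤ) < ⌈(l : ℝ) / γ⌉ := by
    rw [Int.lt_ceil, lt_div_iff₀ hγ.1]
    have : (1 : ℝ) ≤ l := by exact_mod_cast hl
    push_cast
    linarith [hγ.2]
  unfold kk
  constructor <;> omega

/-- The decidability argument is implicit rather than an instance, so that the lemma also applies
to filters built with classical decidability. -/
lemma filter_sup_spec (T : Finset ℕ) (p : ℕ → Prop) {d : DecidablePred p}
    (h : (T.filter p).sup id ≠ 0) : (T.filter p).sup id ∈ T ∧ p ((T.filter p).sup id) := by
  have hne : (T.filter p).Nonempty := by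
    by_contra hcon
    rw [Finset.not_nonempty_iff_eq_empty] at hcon
    exact h (by rw [hcon]; rfl)
  obtain ⟨r, hr, hreq⟩ := Finset.exists_mem_eq_sup _ hne id
  rw [hreq]
  exact Finset.mem_filter.1 hr

lemma numRejSD_spec {Ω : Type*} (n : ℕ) (PV : ℕ → Ω → ℝ) (c : ℕ → ℝ) (ω : Ω)
    (h : numRejSD n PV c ω ≠ 0) :
    numRejSD n PV c ω ≤ n ∧ ∀ j ∈ Finset.Icc 1 (numRejSD n PV c ω),
      j ≤ numLe (Finset.Icc 1 n) PV (c j) ω := by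
  obtain ⟨h1, h2⟩ := filter_sup_spec _ _ h
  exact ⟨(Finset.mem_Icc.1 h1).2, h2⟩

/-- If the step-down FDP exceeds `γ`, then for some level `l ≤ N(|I|)` at least `l` true null
p-values are at most `β_l`. -/
lemma exists_level_of_FDPSD_gt {Ω : Type*} (n : ℕ) (hn : 1 ≤ n) (γ : ℝ)
    (hγ : γ ∈ Set.Ioo (0 : ℝ) 1) (PV : ℕ → Ω → ℝ) (I : Finset ℕ) (hI : I ⊆ Finset.Icc 1 n)
    (c : ℕ → ℝ) (hcmono : MonotoneOn c (Set.Icc 1 n)) (ω : Ω) (h : γ < FDPSD n PV c I ω) :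
    ∃ l ∈ Finset.Icc 1 (NN γ n I.card),
      l ≤ (I.filter fun i => PV i ω ≤ betaSD γ n I.card c l).card := by
  classical
  obtain ⟨hγ0, hγ1⟩ := hγ
  have hIn : I.card ≤ n := by simpa using Finset.card_le_card hI
  unfold FDPSD at h
  split_ifs at h with hR0
  · exact absurd h (not_lt.2 hγ0.le)
  set R := numRejSD n PV c ω with hR
  have hRpos : (0 : ℝ) < R := by exact_mod_cast Nat.pos_of_ne_zero hR0
  rw [lt_div_iff₀ hRpos] at h
  have hV : VSD n PV c I ω = (I.filter fun i => PV i ω ≤ c R).card := by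
    unfold VSD numFalse
    rw [← hR, if_neg hR0]
  rw [hV] at h
  obtain ⟨hRn, hRle⟩ := numRejSD_spec n PV c ω hR0
  rw [← hR] at hRn hRle
  have hex : ∃ r, 1 ≤ r ∧ γ * r < ((I.filter fun i => PV i ω ≤ c r).card : ℝ) :=
    ⟨R, Nat.pos_of_ne_zero hR0, h⟩
  set r := Nat.find hex with hrdef
  obtain ⟨hr1, hrV⟩ := Nat.find_spec hex
  rw [← hrdef] at hr1 hrV
  have hrR : r ≤ R := Nat.find_min' hex ⟨Nat.pos_of_ne_zero hR0, h⟩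
  have hrn : r ≤ n := hrR.trans hRn
  -- Minimality of `r`: at least `r - 1 - v` hypotheses are false, with `v ≤ γ (r - 1)`.
  obtain ⟨v, hv, hcount⟩ : ∃ v : ℕ, (v : ℝ) ≤ γ * ((r : ℝ) - 1) ∧ r - 1 + I.card ≤ n + v := by
    rcases Nat.eq_or_lt_of_le hr1 with h1 | h1
    · exact ⟨0, by rw [← h1]; simp, by omega⟩
    · refine ⟨(I.filter fun i => PV i ω ≤ c (r - 1)).card, ?_, ?_⟩
      · have := Nat.find_min hex (m := r - 1) (by omega)
        rw [not_and, not_lt, Nat.cast_sub hr1] at this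
        simpa using this (by omega)
      · have h2 : r - 1 ≤ numLe (Finset.Icc 1 n) PV (c (r - 1)) ω :=
          hRle (r - 1) (Finset.mem_Icc.2 ⟨by omega, by omega⟩)
        have h3 : numLe (Finset.Icc 1 n) PV (c (r - 1)) ω ≤
            (Finset.Icc 1 n \ I).card + (I.filter fun i => PV i ω ≤ c (r - 1)).card := by
          unfold numLe
          refine (Finset.card_le_card ?_).trans (Finset.card_union_le _ _)
          intro i hi
          simp only [Finset.mem_filter, Finset.mem_union, Finset.mem_sdiff] at hi ⊢
          tauto
        have h4 : (Finset.Icc 1 n \ I).card = n - I.card := by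
          rw [Finset.card_sdiff_of_subset hI]
          simp
        omega
  have hfl0 : 0 ≤ ⌊γ * (r : ℝ)⌋ := Int.floor_nonneg.2 (by positivity)
  obtain ⟨q, hq⟩ := Int.eq_ofNat_of_zero_le hfl0
  have hq1 : (q : ℝ) ≤ γ * r := by
    have := Int.floor_le (γ * (r : ℝ))
    rw [hq] at this
    exact_mod_cast this
  have hq2 : γ * r < (q : ℝ) + 1 := by
    have := Int.lt_floor_add_one (γ * (r : ℝ))
    rw [hq] at this
    exact_mod_cast this
  have hcard : q + 1 ≤ (I.filter fun i => PV i ω ≤ c r).card := by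
    have : (q : ℝ) < (I.filter fun i => PV i ω ≤ c r).card := hq1.trans_lt hrV
    exact_mod_cast this
  have hvq : v ≤ q := by
    have : (v : ℝ) < (q : ℝ) + 1 := by nlinarith
    have : v < q + 1 := by exact_mod_cast this
    omega
  have hrk : r ≤ kk γ n I.card (q + 1) := by
    have h1 : (r : ℤ) < ⌈((q + 1 : ℕ) : ℝ) / γ⌉ := by
      rw [Int.lt_ceil, lt_div_iff₀ hγ0]
      push_cast
      linarith
    unfold kk
    omega
  refine ⟨q + 1, Finset.mem_Icc.2 ⟨by omega, ?_⟩, ?_⟩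
  · have h1 : ⌊γ * (r : ℝ)⌋ ≤ ⌊γ * (n : ℝ)⌋ := by
      apply Int.floor_le_floor
      gcongr
    have h2 : ⌊γ * (r : ℝ)⌋ ≤ ⌊γ * ((((n : ℝ) - (I.card : ℝ)) / (1 - γ)) + 1)⌋ := by
      apply Int.floor_le_floor
      gcongr
      rw [← sub_le_iff_le_add, le_div_iff₀ (by linarith)]
      have : (r : ℝ) - 1 + I.card ≤ n + v := by
        have h5 : ((r - 1 + I.card : ℕ) : ℝ) ≤ ((n + v : ℕ) : ℝ) := by exact_mod_cast hcount
        push_cast [Nat.cast_sub hr1] at h5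
        linarith
      linarith
    have h3 : q + 1 ≤ I.card := hcard.trans (Finset.card_filter_le _ _)
    unfold NN
    omega
  · have hle : c r ≤ betaSD γ n I.card c (q + 1) := by
      unfold betaSD
      rw [if_neg (by omega)]
      exact hcmono ⟨hr1, hrn⟩ (kk_mem γ ⟨hγ0, hγ1⟩ n _ _ hn hIn (by omega)) hrk
    refine hcard.trans (Finset.card_le_card ?_)
    intro i hi
    rw [Finset.mem_filter] at hi ⊢
    exact ⟨hi.1, hi.2.trans hle⟩

/-! ### The bound on the probability -/

/-- A bound `P (X ≤ u) ≤ u` on `(0, 1)` extends to the closed interval. -/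
lemma null_le {Ω : Type*} [MeasurableSpace Ω] (P : Measure Ω) [IsProbabilityMeasure P]
    (X : Ω → ℝ) (h : ∀ u ∈ Set.Ioo (0 : ℝ) 1, P {ω | X ω ≤ u} ≤ ENNReal.ofReal u)
    (u : ℝ) (hu0 : 0 ≤ u) (hu1 : u ≤ 1) : P {ω | X ω ≤ u} ≤ ENNReal.ofReal u := by
  rcases hu1.eq_or_lt with rfl | h1
  · simpa using prob_le_one
  rcases hu0.eq_or_lt with rfl | h0
  · refine ENNReal.le_of_forall_pos_le_add fun ε hε _ => ?_
    have hm : (0 : ℝ) < min (ε : ℝ) (1 / 2) := lt_min (by exact_mod_cast hε) (by norm_num)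
    calc P {ω | X ω ≤ 0} ≤ P {ω | X ω ≤ min (ε : ℝ) (1 / 2)} :=
          measure_mono fun ω hω => le_trans (by exact hω) hm.le
      _ ≤ ENNReal.ofReal (min (ε : ℝ) (1 / 2)) :=
          h _ ⟨hm, (min_le_right _ _).trans_lt (by norm_num)⟩
      _ ≤ ENNReal.ofReal (ε : ℝ) := ENNReal.ofReal_le_ofReal (min_le_left _ _)
      _ = ENNReal.ofReal 0 + ε := by simp
  · exact h u ⟨h0, h1⟩

/-- the Lehmann–Romano-type bound for the step-down FDP. -/
theorem statement9 {Ω : Type*} [MeasurableSpace Ω] (P : Measure Ω) [IsProbabilityMeasure P]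
    (n : ℕ) (hn : 1 ≤ n) (γ : ℝ) (hγ : γ ∈ Set.Ioo (0 : ℝ) 1)
    (PV : ℕ → Ω → ℝ) (hPV : ∀ i ∈ Finset.Icc 1 n, ∀ ω, PV i ω ∈ Set.Icc (0 : ℝ) 1)
    (I : Finset ℕ) (hI : I ⊆ Finset.Icc 1 n) (hIne : I.Nonempty)
    (hnull : ∀ i ∈ I, ∀ u ∈ Set.Ioo (0 : ℝ) 1, P {ω | PV i ω ≤ u} ≤ ENNReal.ofReal u)
    (c : ℕ → ℝ) (hc1 : 0 ≤ c 1) (hcmono : MonotoneOn c (Set.Icc 1 n)) (hcn : c n ≤ 1) :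
    P {ω | γ < FDPSD n PV c I ω} ≤
      ENNReal.ofReal ((I.card : ℝ) * ∑ l ∈ Finset.Icc 1 (NN γ n I.card),
        (betaSD γ n I.card c l - betaSD γ n I.card c (l - 1)) / (l : ℝ)) := by
  have hIn : I.card ≤ n := by simpa using Finset.card_le_card hI
  have hbeta : ∀ l, betaSD γ n I.card c l ∈ Set.Icc (0 : ℝ) 1 := by
    intro l
    unfold betaSD
    split_ifs with hl
    · simp
    · have hk := kk_mem γ hγ n I.card l hn hIn (by omega)
      exact ⟨hc1.trans (hcmono ⟨le_rfl, hn⟩ hk hk.1), (hcmono hk ⟨hn, le_rfl⟩ hk.2).trans hcn⟩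
  refine (measure_mono fun ω hω =>
    exists_level_of_FDPSD_gt n hn γ hγ PV I hI c hcmono ω hω).trans ?_
  refine measure_simes_le P PV I _ (betaSD γ n I.card c) (by simp [betaSD])
    (fun l _ => (hbeta l).1) ?_
    (fun i hi l _ => null_le P (PV i) (hnull i hi) _ (hbeta l).1 (hbeta l).2)
  intro m l hm hml _
  unfold betaSD
  rw [if_neg (by omega), if_neg (by omega)]
  exact hcmono (kk_mem γ hγ n _ m hn hIn hm) (kk_mem γ hγ n _ l hn hIn (by omega))
    (kk_mono γ hγ.1 n _ m l hml)

end GenError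

end
end

section
/- Fix n ≥ 1, 1 ≤ k ≤ n and c ∈ ℝ^n. For every i with k ≤ i ≤ n, Σ_{j=1}^{n} A^{kFWER-SU}_{ij}(k) · c_j = i · ( c_{n−i+k}/k + Σ_{p=k+1}^{i} (c_{n−i+p} − c_{n−i+p−1})/p ), and for every i < k, Σ_{j=1}^{n} A^{kFWER-SU}_{ij}(k) · c_j = 0. -/
/-!
For `k ≤ i`, the substitution `j = (n - i) + p` shows that row `i` of `AkSU n k` is supported on
`k ≤ p ≤ i`, with entry `i (1/p - 1/(p+1))` for `p < i` and `1 = i · (1/i)` for `p = i`. The row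
applied to `c` is therefore `i` times the left-hand side of the summation by parts identity
`sum_by_parts_inv`, taken at `f p = c (n - i + p)`. For `i < k` the row vanishes by definition.
-/

open MeasureTheory

noncomputable section

namespace GenError

variable {Ω : Type*}

/-- Summation by parts for the weights `1/p - 1/(p+1)`. -/
theorem sum_by_parts_inv (f : ℕ → ℝ) (k i : ℕ) (hki : k ≤ i) :
    ∑ p ∈ Finset.Ico k i, (1 / (p : ℝ) - 1 / ((p : ℝ) + 1)) * f p + f i / (i : ℝ) =
      f k / (k : ℝ) + ∑ p ∈ Finset.Icc (k + 1) i, (f p - f (p - 1)) / (p : ℝ) := by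
  induction i, hki using Nat.le_induction with
  | base => simp
  | succ i hki ih =>
    rw [Finset.sum_Ico_succ_top hki, Finset.sum_Icc_succ_top (by omega), ← add_assoc, ← ih]
    simp only [Nat.add_sub_cancel]
    push_cast
    ring

/-- the explicit form of the rows of `A^{kFWER-SU}(k)` applied to `c`. -/
theorem statement13 (n k : ℕ) (hn : 1 ≤ n) (hk : 1 ≤ k) (hkn : k ≤ n) (c : ℕ → ℝ) :
    ∀ i ∈ Finset.Icc 1 n,
      (k ≤ i →
        ∑ j ∈ Finset.Icc 1 n, AkSU n k i j * c j =
          (i : ℝ) * (c (n - i + k) / (k : ℝ) +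
            ∑ p ∈ Finset.Icc (k + 1) i, (c (n - i + p) - c (n - i + p - 1)) / (p : ℝ))) ∧
      (i < k → ∑ j ∈ Finset.Icc 1 n, AkSU n k i j * c j = 0) := by
  intro i hi
  obtain ⟨hi1, hin⟩ := Finset.mem_Icc.mp hi
  refine ⟨fun hki => ?_, fun hik => by simp [AkSU, hik]⟩
  obtain ⟨m, rfl⟩ : ∃ m, n = m + i := ⟨n - i, by omega⟩
  have hsupp : ∑ j ∈ Finset.Icc 1 (m + i), AkSU (m + i) k i j * c j =
      ∑ j ∈ Finset.Ico (k + m) (i + 1 + m), AkSU (m + i) k i j * c j := by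
    symm
    apply Finset.sum_subset
    · intro j hj
      simp only [Finset.mem_Ico, Finset.mem_Icc] at hj ⊢
      omega
    · intro j hj hj'
      simp only [Finset.mem_Ico, Finset.mem_Icc] at hj hj'
      have h : j < m + i + k - i := by omega
      simp [AkSU, h]
  have hrow : ∀ p ∈ Finset.Ico k i, AkSU (m + i) k i (p + m) * c (p + m) =
      (i : ℝ) * ((1 / (p : ℝ) - 1 / ((p : ℝ) + 1)) * c (m + p)) := by
    intro p hp
    obtain ⟨hp1, hp2⟩ := Finset.mem_Ico.mp hp
    have h3 : p + m + i - (m + i) = p := by omega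
    rw [AkSU, if_neg (by omega), if_neg (by omega), if_pos (by omega), h3, add_comm p m]
    ring
  have hlast : AkSU (m + i) k i (i + m) = 1 := by
    rw [AkSU, if_neg (by omega), if_neg (by omega), if_neg (by omega), if_pos (by omega)]
  have hi0 : (i : ℝ) ≠ 0 := by exact_mod_cast (by omega : i ≠ 0)
  have habel := sum_by_parts_inv (fun p => c (m + p)) k i hki
  have hidx : ∑ p ∈ Finset.Icc (k + 1) i, (c (m + p) - c (m + p - 1)) / (p : ℝ) =
      ∑ p ∈ Finset.Icc (k + 1) i, (c (m + p) - c (m + (p - 1))) / (p : ℝ) := by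
    refine Finset.sum_congr rfl fun p hp => ?_
    rw [Nat.add_sub_assoc (by have := (Finset.mem_Icc.mp hp).1; omega)]
  rw [Nat.add_sub_cancel, hidx, ← habel, hsupp,
    ← Finset.sum_Ico_add' (fun j => AkSU (m + i) k i j * c j),
    Finset.sum_Ico_succ_top hki, Finset.sum_congr rfl hrow, ← Finset.mul_sum, hlast,
    add_comm i m]
  field_simp

end GenError

end
end

section
/- Fix n ≥ 1, γ ∈ [0,1), i ∈ {1,…,n} and c ∈ ℝ^n. Then Σ_{j=1}^{n} A^{FDP-SU}_{ij}(γ) · c_j = i · Σ_{k=1}^{M(i)} (c_{t_k(i)} − c_{t_{k−1}(i)})/k, where by convention c_{t_0(i)} = 0. -/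
/-!
The point of the argument is that `k ↦ t_k(i)` is a bijection from `{1,…,M(i)}` onto the set of
columns where row `i` of `A^{FDP-SU}(γ)` may be nonzero. Indeed `g_i(1) = 1` because `γ < 1` and
`i ≤ n`, and `g_i` grows by at most `1` at each step, so on `{1,…,M̃(i)}` it attains every value
`1,…,M(i)` (`exists_gg_eq`). Hence `g_i(t_k(i)) = k` (`tt_spec`), which gives injectivity and lets
one read off the entry in column `t_k(i)`. After this reindexing the claim is summation by parts
(`sum_by_parts`).
-/

open MeasureTheory

noncomputable section

namespace GenError

variable {Ω : Type*}

lemma mfl_succ_le {γ : ℝ} (hγ0 : 0 ≤ γ) (hγ1 : γ < 1) (l : ℕ) :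
    mfl γ (l + 1) ≤ mfl γ l + 1 := by
  have h1 : ⌊γ * ((l + 1 : ℕ) : ℝ)⌋ ≤ ⌊γ * (l : ℝ)⌋ + 1 := by
    rw [← Int.floor_add_one]
    apply Int.floor_le_floor
    push_cast
    linarith
  have h2 : 0 ≤ ⌊γ * (l : ℝ)⌋ := Int.floor_nonneg.2 (by positivity)
  unfold mfl
  omega

lemma mfl_one {γ : ℝ} (hγ0 : 0 ≤ γ) (hγ1 : γ < 1) : mfl γ 1 = 1 := by
  have : ⌊γ⌋ = 0 := Int.floor_eq_zero_iff.2 ⟨hγ0, hγ1⟩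
  simp [mfl, this]

lemma gg_one {γ : ℝ} (hγ0 : 0 ≤ γ) (hγ1 : γ < 1) {n i : ℕ} (hi : i ≤ n) :
    gg γ n i 1 = 1 := by
  rw [gg, mfl_one hγ0 hγ1]
  omega

lemma gg_succ_le {γ : ℝ} (hγ0 : 0 ≤ γ) (hγ1 : γ < 1) (n i l : ℕ) :
    gg γ n i (l + 1) ≤ gg γ n i l + 1 := by
  have := mfl_succ_le hγ0 hγ1 l
  unfold gg
  omega

/-- A discrete intermediate value property: on `{1,…,L}` the map `g_i`, which starts at `1` and
never jumps upwards by more than `1`, attains every value between `1` and `g_i(L)`. -/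
lemma exists_gg_eq {γ : ℝ} (hγ0 : 0 ≤ γ) (hγ1 : γ < 1) {n i : ℕ} (hi : i ≤ n) {L : ℕ}
    (hL : 1 ≤ L) {k : ℕ} (hk : 1 ≤ k) (hkL : k ≤ gg γ n i L) :
    ∃ l ∈ Finset.Icc 1 L, gg γ n i l = k := by
  induction L, hL using Nat.le_induction with
  | base =>
    have h1 := gg_one hγ0 hγ1 hi
    exact ⟨1, by simp, by omega⟩
  | succ L hL ih =>
    by_cases h : k ≤ gg γ n i L
    · obtain ⟨l, hl, hlk⟩ := ih h
      rw [Finset.mem_Icc] at hl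
      exact ⟨l, Finset.mem_Icc.2 ⟨hl.1, by omega⟩, hlk⟩
    · have h1 := gg_succ_le hγ0 hγ1 n i L
      exact ⟨L + 1, Finset.mem_Icc.2 ⟨by omega, le_rfl⟩, by omega⟩

lemma Mt_le (γ : ℝ) (n i : ℕ) : Mt γ n i ≤ n := by
  refine Finset.sup_le fun l hl => ?_
  exact (Finset.mem_Icc.1 (Finset.mem_filter.1 hl).1).2

lemma one_le_Mt {γ : ℝ} (hγ0 : 0 ≤ γ) (hγ1 : γ < 1) {n i : ℕ} (hi1 : 1 ≤ i) (hi : i ≤ n) :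
    1 ≤ Mt γ n i := by
  refine Finset.le_sup (f := id) (b := 1) (Finset.mem_filter.2 ⟨?_, ?_⟩)
  · exact Finset.mem_Icc.2 ⟨le_rfl, hi1.trans hi⟩
  · rwa [mfl_one hγ0 hγ1]

/-- For `k ∈ {1,…,M(i)}` the maximum defining `t_k(i)` is taken over a nonempty set, hence is
attained. -/
lemma tt_spec {γ : ℝ} (hγ0 : 0 ≤ γ) (hγ1 : γ < 1) {n i : ℕ} (hi1 : 1 ≤ i) (hi : i ≤ n)
    {k : ℕ} (hk : k ∈ Finset.Icc 1 (MM γ n i)) :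
    tt γ n i k ∈ Finset.Icc 1 n ∧ gg γ n i (tt γ n i k) = k := by
  rw [Finset.mem_Icc] at hk
  obtain ⟨l, hl, hlk⟩ := exists_gg_eq hγ0 hγ1 hi (one_le_Mt hγ0 hγ1 hi1 hi) hk.1 hk.2
  have hne : ((Finset.Icc 1 (Mt γ n i)).filter fun l => gg γ n i l = k).Nonempty :=
    ⟨l, Finset.mem_filter.2 ⟨hl, hlk⟩⟩
  obtain ⟨a, ha, hsup⟩ := Finset.exists_mem_eq_sup _ hne id
  have hta : tt γ n i k = a := hsup
  rw [Finset.mem_filter, Finset.mem_Icc] at ha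
  rw [hta, Finset.mem_Icc]
  exact ⟨⟨ha.1.1, ha.1.2.trans (Mt_le γ n i)⟩, ha.2⟩

lemma sum_by_parts (f : ℕ → ℝ) (hf : f 0 = 0) (N : ℕ) :
    ∑ k ∈ Finset.Icc 1 (N + 1), (f k - f (k - 1)) / (k : ℝ) =
      ∑ k ∈ Finset.Icc 1 N, (1 / (k : ℝ) - 1 / ((k : ℝ) + 1)) * f k +
        1 / ((N : ℝ) + 1) * f (N + 1) := by
  induction N with
  | zero => simp [hf]
  | succ N ih =>
    rw [Finset.sum_Icc_succ_top (by omega), ih, Finset.sum_Icc_succ_top (by omega)]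
    simp only [Nat.add_sub_cancel]
    push_cast
    ring

/-- the explicit form of the rows of `A^{FDP-SU}(γ)` applied to `c`,
with the convention `c (t_0(i)) = 0`. -/
theorem statement14 (n : ℕ) (hn : 1 ≤ n) (γ : ℝ) (hγ : γ ∈ Set.Ico (0 : ℝ) 1)
    (i : ℕ) (hi : i ∈ Finset.Icc 1 n) (c : ℕ → ℝ) :
    ∑ j ∈ Finset.Icc 1 n, AFDPSU γ n i j * c j =
      (i : ℝ) * ∑ k ∈ Finset.Icc 1 (MM γ n i),
        (cT γ n i c k - cT γ n i c (k - 1)) / (k : ℝ) := by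
  obtain ⟨hγ0, hγ1⟩ := hγ
  obtain ⟨hi1, hin⟩ := Finset.mem_Icc.1 hi
  have hspec : ∀ k ∈ Finset.Icc 1 (MM γ n i),
      tt γ n i k ∈ Finset.Icc 1 n ∧ gg γ n i (tt γ n i k) = k :=
    fun k hk => tt_spec hγ0 hγ1 hi1 hin hk
  have hM : 1 ≤ MM γ n i := (Nat.le_add_left 1 _).trans (le_max_right _ _)
  -- Only the columns `t_k(i)`, `1 ≤ k ≤ M(i)`, contribute, each for exactly one `k`.
  have hreindex : ∑ k ∈ Finset.Icc 1 (MM γ n i),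
      AFDPSU γ n i (tt γ n i k) * c (tt γ n i k) =
      ∑ j ∈ Finset.Icc 1 n, AFDPSU γ n i j * c j := by
    refine Finset.sum_of_injOn (tt γ n i) ?_ (fun k hk => (hspec k hk).1) ?_ (fun _ _ => rfl)
    · intro a ha b hb hab
      rw [← (hspec a ha).2, ← (hspec b hb).2, hab]
    · intro j _ hj
      have hj' : ∀ k, 1 ≤ k → k ≤ MM γ n i → j ≠ tt γ n i k := fun k h1 h2 h =>
        hj ⟨k, Finset.mem_coe.2 (Finset.mem_Icc.2 ⟨h1, h2⟩), h.symm⟩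
      rw [AFDPSU, if_neg (hj' _ hM le_rfl),
        if_neg fun h => hj' _ h.1 h.2.1.le h.2.2, zero_mul]
  have htop : AFDPSU γ n i (tt γ n i (MM γ n i)) = (i : ℝ) / (MM γ n i : ℝ) := if_pos rfl
  have hlow : ∀ k, 1 ≤ k → k < MM γ n i →
      AFDPSU γ n i (tt γ n i k) = (i : ℝ) * (1 / (k : ℝ) - 1 / ((k : ℝ) + 1)) := by
    intro k h1 h2
    have hk := (hspec k (Finset.mem_Icc.2 ⟨h1, h2.le⟩)).2
    have hne : tt γ n i k ≠ tt γ n i (MM γ n i) := fun h => by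
      have hm := (hspec _ (Finset.mem_Icc.2 ⟨hM, le_rfl⟩)).2
      rw [← h, hk] at hm
      omega
    rw [AFDPSU, if_neg hne, hk, if_pos ⟨h1, h2, rfl⟩]
  rw [← hreindex]
  obtain ⟨N, hN⟩ : ∃ N, MM γ n i = N + 1 := ⟨MM γ n i - 1, by omega⟩
  rw [hN] at htop hlow ⊢
  rw [sum_by_parts (cT γ n i c) (if_pos rfl), Finset.sum_Icc_succ_top (by omega), htop, mul_add,
    Finset.mul_sum]
  congr 1
  · refine Finset.sum_congr rfl fun k hk => ?_
    rw [Finset.mem_Icc] at hk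
    rw [hlow k hk.1 (by omega), cT, if_neg (by omega)]
    ring
  · rw [cT, if_neg (by omega)]
    push_cast
    ring

end GenError

end
end

section
/- Fix n ≥ 1, 1 ≤ k ≤ n, a probability space (Ω, P), p-values PV_1, …, PV_n : Ω → [0,1], and a nonempty set I ⊆ {1,…,n} of true hypotheses with P(PV_i ≤ u) ≤ u for all i ∈ I and u ∈ (0,1). Let 0 ≤ c_1 ≤ ⋯ ≤ c_n ≤ 1, assume k ≤ |I|, and consider the step-down procedure with these constants. Then P(V ≥ k) ≤ (|I|/k) · c_{n−|I|+k}, where V is the number of rejected true hypotheses. -/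
/-!
Put `m = n - |I| + k`. Rejecting at least `k` true hypotheses forces at least `k` true p-values
to be `≤ c m`. Indeed, let `R` be the number of rejections. If `R ≤ m`, the rejected true
hypotheses have p-values `≤ c R ≤ c m`. If `R ≥ m`, the step-down rule gives at least `m`
p-values `≤ c m`, of which at most `n - |I|` come from false hypotheses
(`le_numLe_of_le_VSD`). Markov's inequality for the number of true p-values `≤ c m`
(`measure_le_card_filter`) and super-uniformity of these p-values (`measure_le_ofReal_of_Ioo`)
then give the bound. The p-values are not assumed measurable, so Markov's inequality is
proved for outer measures.
-/

open MeasureTheory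

noncomputable section

namespace GenError

variable {Ω : Type*}

/-- Markov's inequality for the number of events that occur. The events need not be
measurable: each is replaced by a measurable hull of the same outer measure. -/
lemma measure_le_card_filter {ι : Type*} [MeasurableSpace Ω] (P : Measure Ω) (I : Finset ι)
    (A : ι → Set Ω) [∀ ω, DecidablePred fun i => ω ∈ A i] (k : ℕ) (hk : 1 ≤ k) :
    P {ω | k ≤ (I.filter fun i => ω ∈ A i).card} ≤ (∑ i ∈ I, P (A i)) / k := by
  let f : Ω → ENNReal := fun ω => ∑ i ∈ I, (toMeasurable P (A i)).indicator 1 ω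
  have hmeas : ∀ i ∈ I, Measurable ((toMeasurable P (A i)).indicator (1 : Ω → ENNReal)) :=
    fun i _ => measurable_one.indicator (measurableSet_toMeasurable P (A i))
  have hf : Measurable f := Finset.measurable_fun_sum I hmeas
  have hint : ∫⁻ ω, f ω ∂P = ∑ i ∈ I, P (A i) := by
    rw [lintegral_finsetSum I hmeas]
    refine Finset.sum_congr rfl fun i _ => ?_
    rw [lintegral_indicator_one (measurableSet_toMeasurable P (A i)), measure_toMeasurable]
  have hk0 : (k : ENNReal) ≠ 0 := by
    simpa using Nat.one_le_iff_ne_zero.mp hk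
  calc P {ω | k ≤ (I.filter fun i => ω ∈ A i).card}
      ≤ P {ω | (k : ENNReal) ≤ f ω} := by
        refine measure_mono fun ω (hω : k ≤ _) => ?_
        calc (k : ENNReal) ≤ ((I.filter fun i => ω ∈ A i).card : ENNReal) := by
              exact_mod_cast hω
          _ = ∑ i ∈ I, if ω ∈ A i then 1 else 0 := by simp
          _ ≤ f ω := by
              refine Finset.sum_le_sum fun i _ => ?_
              split_ifs with h
              · rw [Set.indicator_of_mem (subset_toMeasurable P (A i) h)]
                rfl
              · exact zero_le
    _ ≤ (∫⁻ ω, f ω ∂P) / k :=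
        meas_ge_le_lintegral_div hf.aemeasurable hk0 (ENNReal.natCast_ne_top k)
    _ = (∑ i ∈ I, P (A i)) / k := by rw [hint]

/-- Super-uniformity on the open interval extends to its endpoints: at `0` by letting `u ↓ 0`,
at `1` because `P` has total mass one. -/
lemma measure_le_ofReal_of_Ioo [MeasurableSpace Ω] (P : Measure Ω) [IsProbabilityMeasure P]
    (X : Ω → ℝ) (h : ∀ u ∈ Set.Ioo (0 : ℝ) 1, P {ω | X ω ≤ u} ≤ ENNReal.ofReal u)
    {x : ℝ} (hx0 : 0 ≤ x) (hx1 : x ≤ 1) : P {ω | X ω ≤ x} ≤ ENNReal.ofReal x := by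
  rcases hx1.eq_or_lt with rfl | hx1
  · simpa using prob_le_one
  have hlim : Filter.Tendsto ENNReal.ofReal (nhdsWithin x (Set.Ioi x))
      (nhds (ENNReal.ofReal x)) :=
    (ENNReal.continuous_ofReal.tendsto x).mono_left nhdsWithin_le_nhds
  refine ge_of_tendsto hlim ?_
  filter_upwards [Ioo_mem_nhdsGT hx1] with u hu
  exact (measure_mono fun ω (hω : X ω ≤ x) => hω.trans hu.1.le).trans
    (h u ⟨hx0.trans_lt hu.1, hu.2⟩)

lemma sup_id_mem_of_ne_zero {S : Finset ℕ} (h : S.sup id ≠ 0) : S.sup id ∈ S := by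
  have hne : S.Nonempty := by
    rw [Finset.nonempty_iff_ne_empty]
    rintro rfl
    exact h Finset.sup_empty
  obtain ⟨r, hr, hreq⟩ := Finset.exists_mem_eq_sup S hne id
  rw [hreq]
  exact hr

/-- If at least `k` true hypotheses are rejected, then at least `k` true hypotheses have
p-value at most `c (n - |I| + k)`. -/
lemma le_numLe_of_le_VSD (n k : ℕ) (hk : 1 ≤ k) (PV : ℕ → Ω → ℝ)
    (I : Finset ℕ) (hI : I ⊆ Finset.Icc 1 n)
    (c : ℕ → ℝ) (hcmono : MonotoneOn c (Set.Icc 1 n)) (hkI : k ≤ I.card) (ω : Ω)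
    (hV : k ≤ VSD n PV c I ω) : k ≤ numLe I PV (c (n - I.card + k)) ω := by
  classical
  have hIn : I.card ≤ n := by simpa using Finset.card_le_card hI
  set m := n - I.card + k with hm
  unfold VSD numFalse at hV
  split_ifs at hV with hR
  · omega
  -- The supremum defining a nonzero number of rejections is attained.
  have hmem : numRejSD n PV c ω ∈ Finset.Icc 1 n ∧
      ∀ j ∈ Finset.Icc 1 (numRejSD n PV c ω), j ≤ numLe (Finset.Icc 1 n) PV (c j) ω := by
    -- `numRejSD` filters with the classical decidability instance, so it is left to unification.
    exact (@Finset.mem_filter _ _ (_) _ _).mp (sup_id_mem_of_ne_zero hR)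
  obtain ⟨hRn, hRj⟩ := hmem
  rw [Finset.mem_Icc] at hRn
  rcases le_total (numRejSD n PV c ω) m with hle | hle
  · have hcR : c (numRejSD n PV c ω) ≤ c m := hcmono hRn ⟨by omega, by omega⟩ hle
    exact hV.trans (Finset.card_le_card
      (Finset.monotone_filter_right I fun i _ hi => hi.trans hcR))
  · have hmle := hRj m (Finset.mem_Icc.mpr ⟨by omega, hle⟩)
    -- At most `n - |I|` of the p-values `≤ c m` belong to false hypotheses.
    have hsub : ((Finset.Icc 1 n).filter fun i => PV i ω ≤ c m) ⊆
        (I.filter fun i => PV i ω ≤ c m) ∪ (Finset.Icc 1 n \ I) := by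
      intro i hi
      simp only [Finset.mem_filter, Finset.mem_union, Finset.mem_sdiff] at hi ⊢
      tauto
    have hcard := (Finset.card_le_card hsub).trans (Finset.card_union_le _ _)
    rw [Finset.card_sdiff_of_subset hI, Nat.card_Icc] at hcard
    unfold numLe at hmle ⊢
    omega

/-- the step-down k-FWER bound `P(V ≥ k) ≤ (|I|/k) · c (n - |I| + k)`. -/
theorem statement18 {Ω : Type*} [MeasurableSpace Ω] (P : Measure Ω) [IsProbabilityMeasure P]
    (n k : ℕ) (hn : 1 ≤ n) (hk : 1 ≤ k) (hkn : k ≤ n)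
    (PV : ℕ → Ω → ℝ) (hPV : ∀ i ∈ Finset.Icc 1 n, ∀ ω, PV i ω ∈ Set.Icc (0 : ℝ) 1)
    (I : Finset ℕ) (hI : I ⊆ Finset.Icc 1 n) (hIne : I.Nonempty)
    (hnull : ∀ i ∈ I, ∀ u ∈ Set.Ioo (0 : ℝ) 1, P {ω | PV i ω ≤ u} ≤ ENNReal.ofReal u)
    (c : ℕ → ℝ) (hc1 : 0 ≤ c 1) (hcmono : MonotoneOn c (Set.Icc 1 n)) (hcn : c n ≤ 1)
    (hkI : k ≤ I.card) :
    P {ω | k ≤ VSD n PV c I ω} ≤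
      ENNReal.ofReal (((I.card : ℝ) / (k : ℝ)) * c (n - I.card + k)) := by
  classical
  have hIn : I.card ≤ n := by simpa using Finset.card_le_card hI
  have hk0 : (0 : ℝ) < k := by exact_mod_cast hk
  have hm1 : 1 ≤ n - I.card + k := by omega
  have hmn : n - I.card + k ≤ n := by omega
  have hcm0 : 0 ≤ c (n - I.card + k) :=
    hc1.trans (hcmono ⟨le_rfl, hn⟩ ⟨hm1, hmn⟩ hm1)
  have hcm1 : c (n - I.card + k) ≤ 1 :=
    (hcmono ⟨hm1, hmn⟩ ⟨hn, le_rfl⟩ hmn).trans hcn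
  calc P {ω | k ≤ VSD n PV c I ω}
      ≤ P {ω | k ≤ (I.filter fun i => ω ∈ {ω | PV i ω ≤ c (n - I.card + k)}).card} :=
        measure_mono fun ω hω => le_numLe_of_le_VSD n k hk PV I hI c hcmono hkI ω hω
    _ ≤ (∑ i ∈ I, P {ω | PV i ω ≤ c (n - I.card + k)}) / k :=
        measure_le_card_filter P I _ k hk
    _ ≤ (∑ i ∈ I, ENNReal.ofReal (c (n - I.card + k))) / k := by
        gcongr with i hi
        exact measure_le_ofReal_of_Ioo P (PV i) (hnull i hi) hcm0 hcm1
    _ = ENNReal.ofReal (((I.card : ℝ) / (k : ℝ)) * c (n - I.card + k)) := by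
        rw [Finset.sum_const, nsmul_eq_mul, div_mul_eq_mul_div, ENNReal.ofReal_div_of_pos hk0,
          ENNReal.ofReal_mul (by positivity), ENNReal.ofReal_natCast, ENNReal.ofReal_natCast]

end GenError

end
end
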